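/- There exists a constant C > 0 such that K(b,p) ≤ C^{b+p} for all integers b, p ≥ 0. -/

import Mathlib

/-! Fix a truncation `B` and consider the weighted row sums
`R p = ∑ b < B, K(b,p) / 2 ^ b`. Summing the recurrence over `b < B`, the linear term `K(b-1,p)`
contributes at most `R p / 2`, which is absorbed into the left-hand side, while the double sum is
at most the convolution `∑ j < p, R j * R (p-1-j)`, since the terms are nonnegative. Hence
`R 0 ≤ 2` and `R (p+1) ≤ 2 ∑ i + j = p, R i * R j`. This is the Catalan recurrence up to scaling,
so `R p ≤ 2 * 4 ^ p * catalan p ≤ 2 * 16 ^ p` uniformly in `B` (`rowSum_le`). Therefore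
`K(b,p) ≤ 2 * 2 ^ b * 16 ^ p`, and `C = 32` works, the prefactor `2` being absorbed
when `b + p ≥ 1`. -/

open Finset

/-- The array `K(b,p)` counting complete iteration trees of the majorizing recurrence
rooted at `(b,p)`: `K(b,p) = 0` for `b < 0` or `p < 0`, `K(0,0) = 1`, and otherwise
`K(b,p) = Σ_{j=0}^{p-1} Σ_{k=0}^{b} K(k,j)·K(b−k, p−j−1) + K(b−1,p)`. -/
def SatisfiesTreeCount (K : ℤ → ℤ → ℕ) : Prop :=
  (∀ b p : ℤ, b < 0 ∨ p < 0 → K b p = 0) ∧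
  K 0 0 = 1 ∧
  (∀ b p : ℤ, 0 ≤ b → 0 ≤ p → ¬(b = 0 ∧ p = 0) →
    K b p =
      (∑ j ∈ Finset.range p.toNat, ∑ k ∈ Finset.range (b.toNat + 1),
        K k j * K (b - k) (p - j - 1)) +
      K (b - 1) p)

/-- The row sum `∑ b < B, K(b,p) / 2 ^ b`, i.e. the generating function of row `p`,
truncated to degrees below `B` and evaluated at `1/2`. -/
noncomputable def rowSum (K : ℤ → ℤ → ℕ) (B p : ℕ) : ℝ :=
  ∑ b ∈ range B, (K b p : ℝ) / 2 ^ b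

lemma sum_conv_le (f g : ℕ → ℝ) (hf : ∀ n, 0 ≤ f n) (hg : ∀ n, 0 ≤ g n) (B : ℕ) :
    ∑ b ∈ range B, ∑ k ∈ range (b + 1), f k * g (b - k) ≤
      (∑ b ∈ range B, f b) * ∑ b ∈ range B, g b := by
  rw [Finset.sum_range_diag_flip B (fun i j => f i * g j), Finset.sum_mul]
  refine Finset.sum_le_sum fun m _ => ?_
  rw [← Finset.mul_sum]
  refine mul_le_mul_of_nonneg_left ?_ (hf m)
  exact Finset.sum_le_sum_of_subset_of_nonneg (range_mono (Nat.sub_le B m)) fun i _ _ => hg i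

/-- The recurrence with natural-number indices in the double sum, valid also at the origin
thanks to the last term. -/
lemma treeCount_rec {K : ℤ → ℤ → ℕ} (hK : SatisfiesTreeCount K) (b p : ℕ) :
    K b p = (∑ j ∈ range p, ∑ k ∈ range (b + 1), K k j * K (b - k : ℕ) (p - 1 - j : ℕ)) +
      K ((b : ℤ) - 1) p + if b = 0 ∧ p = 0 then 1 else 0 := by
  obtain ⟨hneg, h0, hrec⟩ := hK
  by_cases h : b = 0 ∧ p = 0
  · obtain ⟨rfl, rfl⟩ := h
    simp [h0, hneg (-1) 0 (by simp)]
  · rw [hrec b p (by positivity) (by positivity) (by exact_mod_cast h)]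
    simp only [h, if_false, add_zero, Int.toNat_natCast]
    congr 1
    refine Finset.sum_congr rfl fun j hj => Finset.sum_congr rfl fun k hk => ?_
    rw [mem_range] at hj hk
    have h1 : (b : ℤ) - k = (b - k : ℕ) := by omega
    have h2 : (p : ℤ) - j - 1 = (p - 1 - j : ℕ) := by omega
    rw [h1, h2]

lemma rowSum_nonneg (K : ℤ → ℤ → ℕ) (B p : ℕ) : 0 ≤ rowSum K B p :=
  Finset.sum_nonneg fun _ _ => by positivity

/-- The contribution of the linear term `K(b-1,p)` is at most half of the row sum. -/
lemma sum_shift_le {K : ℤ → ℤ → ℕ} (hK : SatisfiesTreeCount K) (B p : ℕ) :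
    ∑ b ∈ range B, (K ((b : ℤ) - 1) p : ℝ) / 2 ^ b ≤ rowSum K B p / 2 := by
  cases B with
  | zero => simp [rowSum]
  | succ B =>
    rw [Finset.sum_range_succ', rowSum, Finset.sum_range_succ, add_div, Finset.sum_div]
    refine add_le_add (Finset.sum_le_sum fun b _ => ?_) ?_
    · rw [pow_succ, div_div]
      simp
    · rw [hK.1 _ _ (Or.inl (by simp))]
      simp only [Nat.cast_zero, zero_div]
      positivity

/-- The quadratic inequality between the row sums. -/
lemma rowSum_rec {K : ℤ → ℤ → ℕ} (hK : SatisfiesTreeCount K) (B p : ℕ) :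
    rowSum K B p ≤ 2 * ((∑ j ∈ range p, rowSum K B j * rowSum K B (p - 1 - j)) +
      if p = 0 then 1 else 0) := by
  have hquad : ∑ b ∈ range B, (∑ j ∈ range p, ∑ k ∈ range (b + 1),
      (K k j : ℝ) * K (b - k : ℕ) (p - 1 - j : ℕ)) / 2 ^ b ≤
      ∑ j ∈ range p, rowSum K B j * rowSum K B (p - 1 - j) := by
    simp_rw [Finset.sum_div]
    rw [Finset.sum_comm]
    refine Finset.sum_le_sum fun j _ => ?_
    refine le_trans (le_of_eq ?_) (sum_conv_le (fun b => (K b j : ℝ) / 2 ^ b)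
      (fun b => (K b (p - 1 - j : ℕ) : ℝ) / 2 ^ b) (fun _ => by positivity)
      (fun _ => by positivity) B)
    refine Finset.sum_congr rfl fun b _ => Finset.sum_congr rfl fun k hk => ?_
    have hkb : k ≤ b := Nat.lt_succ_iff.mp (mem_range.mp hk)
    rw [div_mul_div_comm, ← pow_add, Nat.add_sub_cancel' hkb]
  have hunit : ∑ b ∈ range B, (if b = 0 ∧ p = 0 then (1 : ℝ) else 0) / 2 ^ b ≤
      if p = 0 then 1 else 0 := by
    by_cases hp : p = 0
    · cases B <;> simp [hp, Finset.sum_range_succ']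
    · simp [hp]
  have hsplit : rowSum K B p =
      ∑ b ∈ range B, (∑ j ∈ range p, ∑ k ∈ range (b + 1),
        (K k j : ℝ) * K (b - k : ℕ) (p - 1 - j : ℕ)) / 2 ^ b +
      ∑ b ∈ range B, (K ((b : ℤ) - 1) p : ℝ) / 2 ^ b +
      ∑ b ∈ range B, (if b = 0 ∧ p = 0 then (1 : ℝ) else 0) / 2 ^ b := by
    rw [← Finset.sum_add_distrib, ← Finset.sum_add_distrib]
    refine Finset.sum_congr rfl fun b _ => ?_
    rw [treeCount_rec hK b p, ← add_div, ← add_div]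
    push_cast
    rfl
  linarith [sum_shift_le hK B p]

lemma rowSum_le {K : ℤ → ℤ → ℕ} (hK : SatisfiesTreeCount K) (B p : ℕ) :
    rowSum K B p ≤ 2 * 4 ^ p * catalan p := by
  induction p using Nat.strong_induction_on with
  | _ p ih =>
    refine (rowSum_rec hK B p).trans ?_
    cases p with
    | zero => simp
    | succ p =>
      have hsum : ∑ j ∈ range (p + 1), rowSum K B j * rowSum K B (p - j) ≤
          4 * 4 ^ p * catalan (p + 1) := by
        rw [catalan_succ, ← Fin.sum_univ_eq_sum_range
          (fun j => rowSum K B j * rowSum K B (p - j)), Nat.cast_sum, Finset.mul_sum]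
        refine Finset.sum_le_sum fun j _ => ?_
        have hj : (j : ℕ) ≤ p := Nat.lt_succ_iff.mp j.2
        refine (mul_le_mul (ih j (by omega)) (ih (p - j) (by omega)) (rowSum_nonneg _ _ _)
          (by positivity)).trans_eq ?_
        have hpow : (4 : ℝ) ^ p = 4 ^ (j : ℕ) * 4 ^ (p - j) := by
          rw [← pow_add, Nat.add_sub_cancel' hj]
        rw [hpow]
        push_cast
        ring
      simp only [Nat.add_sub_cancel, Nat.succ_ne_zero, if_false, add_zero]
      rw [pow_succ]
      linarith

lemma catalan_le_four_pow (p : ℕ) : catalan p ≤ 4 ^ p := by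
  rw [catalan_eq_centralBinom_div]
  refine (Nat.div_le_self _ _).trans ?_
  rw [Nat.centralBinom, show 4 ^ p = 2 ^ (2 * p) by rw [pow_mul]; norm_num]
  exact Nat.choose_le_two_pow _ _

/-- There exists a constant `C > 0` such that `K(b,p) ≤ C^{b+p}` for all integers
`b, p ≥ 0`. -/
theorem treeCount_exponential_bound (K : ℤ → ℤ → ℕ) (hK : SatisfiesTreeCount K) :
    ∃ C : ℝ, 0 < C ∧ ∀ b p : ℕ, (K b p : ℝ) ≤ C ^ (b + p) := by
  refine ⟨32, by norm_num, fun b p => ?_⟩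
  by_cases h : b + p = 0
  · obtain ⟨rfl, rfl⟩ := Nat.add_eq_zero_iff.mp h
    simp [hK.2.1]
  have hrow : (K b p : ℝ) / 2 ^ b ≤ 2 * 16 ^ p := by
    calc (K b p : ℝ) / 2 ^ b ≤ rowSum K (b + 1) p :=
          Finset.single_le_sum (f := fun b : ℕ => (K b p : ℝ) / 2 ^ b)
            (fun _ _ => by positivity) (self_mem_range_succ b)
      _ ≤ 2 * 4 ^ p * catalan p := rowSum_le hK _ _
      _ ≤ 2 * 4 ^ p * 4 ^ p := by
          gcongr
          exact_mod_cast catalan_le_four_pow p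
      _ = 2 * 16 ^ p := by rw [mul_assoc, ← mul_pow]; norm_num
  rw [div_le_iff₀ (by positivity)] at hrow
  calc (K b p : ℝ) ≤ 2 * 16 ^ p * 2 ^ b := hrow
    _ ≤ 2 ^ (b + p) * 16 ^ p * 16 ^ b := by
        gcongr
        · exact le_self_pow₀ (by norm_num) h
        · norm_num
    _ = 32 ^ (b + p) := by
        rw [mul_assoc, ← pow_add, add_comm p b, ← mul_pow]
        norm_num
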